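/- Let G = ∏_{j=1}^t G^{(j)} be a finite direct product of groups, where each G^{(j)} is simple and non-commutative, and let T be a nonempty finite set. A subgroup H of G^T is normalized by the full diagonal subgroup Δ^T(G) = {(g)_{σ∈T} : g ∈ G} if and only if H has the form H = ∏_{j=1}^t ∏_{i=1}^{r_j} Δ^{T_i^{(j)}}(G^{(j)}), where for each j the sets T_1^{(j)}, …, T_{r_j}^{(j)} are pairwise disjoint nonempty subsets of T, and where each G^{(j)} is regarded as a subgroup of G so that Δ^{T'}(G^{(j)}) is a subgroup of (G^{(j)})^T ⊆ G^T. -/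

import Mathlib

/-!
Every coordinate `(σ, j)` gives a homomorphism `H →* G^{(j)}`, `h ↦ h σ j`. Since `H` is normalized
by the diagonal, its image is normal, so it is trivial or surjective. The sets `T_i^{(j)}` are the
fibres, over the nontrivial homomorphisms, of the map sending `σ` to the `(σ, j)`-coordinate.

Different nontrivial coordinate homomorphisms have kernels that do not contain one another. Indeed,
if `g ∈ G` and `h ∈ H` satisfy `g k = h τ k`, then conjugating `h' ∈ H` by `h` and by the diagonal
element of `g` gives the same result at `(τ, k)`. If the kernel at `(τ, k)` lies in the one at
`(σ, j)`, the two results agree at `(σ, j)` as well, and triviality of the center of `G^{(j)}`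
forces `g j = h σ j`. Varying `g` shows `j = k`, and then `g = h τ` shows that the two coordinates
agree on `H`.

A Chinese remainder theorem for surjections onto simple groups with trivial center now shows that
the values of the different nontrivial coordinate homomorphisms can be prescribed independently.
-/

namespace ProductOfDiagonals

section SimpleQuotients

lemma center_eq_bot_of_not_commute {S : Type*} [Group S] [IsSimpleGroup S]
    (hnc : ∃ a b : S, a * b ≠ b * a) : Subgroup.center S = ⊥ := by
  refine (inferInstance : (Subgroup.center S).Normal).eq_bot_or_eq_top.resolve_right fun htop => ?_
  obtain ⟨a, b, hab⟩ := hnc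
  exact hab (Subgroup.mem_center_iff.1 (htop ▸ Subgroup.mem_top b) a)

variable {H S : Type*} [Group H] [Group S] [IsSimpleGroup S] {φ : H →* S}

lemma map_eq_top_of_not_le_ker (hφ : Function.Surjective φ) {M : Subgroup H} (hM : M.Normal)
    (hle : ¬ M ≤ φ.ker) : M.map φ = ⊤ :=
  (hM.map φ hφ).eq_bot_or_eq_top.resolve_left fun hbot => hle (M.map_eq_bot_iff.1 hbot)

lemma le_ker_or_le_ker_of_inf_le_ker (hS : Subgroup.center S = ⊥) (hφ : Function.Surjective φ)
    {M N : Subgroup H} (hM : M.Normal) (hN : N.Normal) (hle : M ⊓ N ≤ φ.ker) :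
    M ≤ φ.ker ∨ N ≤ φ.ker := by
  by_contra! hnot
  have hcomm : ⁅(⊤ : Subgroup S), (⊤ : Subgroup S)⁆ = ⊥ := by
    calc ⁅(⊤ : Subgroup S), (⊤ : Subgroup S)⁆ = ⁅M.map φ, N.map φ⁆ := by
          rw [map_eq_top_of_not_le_ker hφ hM hnot.1, map_eq_top_of_not_le_ker hφ hN hnot.2]
      _ = ⁅M, N⁆.map φ := (Subgroup.map_commutator M N φ).symm
      _ = ⊥ := (Subgroup.map_eq_bot_iff _).2 ((Subgroup.commutator_le_inf M N).trans hle)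
  have htop : (⊤ : Subgroup S) ≤ ⊥ := by
    rwa [Subgroup.commutator_eq_bot_iff_le_centralizer, Subgroup.coe_top,
      Subgroup.centralizer_univ, hS] at hcomm
  exact bot_ne_top (top_le_iff.1 htop)

lemma exists_le_ker_of_biInf_le_ker (hS : Subgroup.center S = ⊥) (hφ : Function.Surjective φ)
    {ι : Type*} {M : ι → Subgroup H} (hM : ∀ i, (M i).Normal) (s : Finset ι)
    (hle : ⨅ i ∈ s, M i ≤ φ.ker) : ∃ i ∈ s, M i ≤ φ.ker := by
  classical
  induction s using Finset.induction_on with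
  | empty =>
    have hbot : (⊤ : Subgroup H).map φ = ⊥ := (Subgroup.map_eq_bot_iff _).2 (by simpa using hle)
    rw [Subgroup.map_top_of_surjective φ hφ] at hbot
    exact absurd hbot top_ne_bot
  | insert i s _ ih =>
    rw [Finset.iInf_insert] at hle
    have hs : (⨅ k ∈ s, M k).Normal :=
      Subgroup.normal_iInf_normal fun k => Subgroup.normal_iInf_normal fun _ => hM k
    rcases le_ker_or_le_ker_of_inf_le_ker hS hφ (hM i) hs hle with hi | hle
    · exact ⟨i, Finset.mem_insert_self i s, hi⟩
    · obtain ⟨k, hk, hkle⟩ := ih hle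
      exact ⟨k, Finset.mem_insert_of_mem hk, hkle⟩

end SimpleQuotients

theorem pi_surjective_of_pairwise_not_ker_le {H ι : Type*} [Group H] [Finite ι] {S : ι → Type*}
    [∀ i, Group (S i)] [∀ i, IsSimpleGroup (S i)] (hS : ∀ i, Subgroup.center (S i) = ⊥)
    {φ : ∀ i, H →* S i} (hφ : ∀ i, Function.Surjective (φ i))
    (hker : Pairwise fun i k => ¬ (φ i).ker ≤ (φ k).ker) :
    Function.Surjective (MonoidHom.pi φ) := by
  classical
  cases nonempty_fintype ι
  intro y
  refine Subgroup.pi_mem_of_mulSingle_mem (H := (MonoidHom.pi φ).range) y fun i => ?_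
  let N : Subgroup H := ⨅ k ∈ Finset.univ.erase i, (φ k).ker
  have hN : N.Normal :=
    Subgroup.normal_iInf_normal fun k => Subgroup.normal_iInf_normal fun _ => inferInstance
  have hle : ¬ N ≤ (φ i).ker := fun hle => by
    obtain ⟨k, hk, hki⟩ :=
      exists_le_ker_of_biInf_le_ker (hS i) (hφ i) (fun k => (φ k).normal_ker) _ hle
    exact hker (Finset.ne_of_mem_erase hk) hki
  obtain ⟨h, hh, hy⟩ : y i ∈ N.map (φ i) :=
    map_eq_top_of_not_le_ker (hφ i) hN hle ▸ Subgroup.mem_top (y i)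
  refine ⟨h, funext fun k => ?_⟩
  by_cases hk : k = i
  · subst hk
    simpa using hy
  · have hhk : h ∈ (φ k).ker := by
      simp only [N, SetLike.mem_coe, Subgroup.mem_iInf] at hh
      exact hh k (Finset.mem_erase.2 ⟨hk, Finset.mem_univ k⟩)
    rw [Pi.mulSingle_eq_of_ne hk]
    exact hhk

section DiagonalProduct

variable {T κ κ' K L : Type*}

/-- The tuple `f ∈ K^T` lies in the product `∏ i, Δ^{P i}(K)` of partial diagonals, where the blocks
`P i` are meant to be pairwise disjoint: it is constant on each block and trivial outside their
union. -/
def MemDiagonalProduct [One K] (P : κ → Set T) (f : T → K) : Prop :=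
  ∃ c : κ → K, (∀ i, ∀ σ ∈ P i, f σ = c i) ∧ ∀ σ, (∀ i, σ ∉ P i) → f σ = 1

lemma MemDiagonalProduct.map [MulOneClass K] [MulOneClass L] {P : κ → Set T} {f : T → K}
    (hf : MemDiagonalProduct P f) (φ : K →* L) : MemDiagonalProduct P (φ ∘ f) := by
  obtain ⟨c, hc, hone⟩ := hf
  exact ⟨φ ∘ c, fun i σ hσ => congrArg φ (hc i σ hσ),
    fun σ hσ => (congrArg φ (hone σ hσ)).trans φ.map_one⟩

lemma memDiagonalProduct_comp_equiv [One K] (e : κ' ≃ κ) {P : κ → Set T} {f : T → K} :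
    MemDiagonalProduct (P ∘ e) f ↔ MemDiagonalProduct P f := by
  refine (e.arrowCongr (Equiv.refl K)).exists_congr fun c => and_congr ?_ ?_
  · exact e.forall_congr fun i => by simp
  · exact forall_congr' fun σ => imp_congr_left (e.forall_congr fun _ => Iff.rfl)

end DiagonalProduct

variable {ι T : Type*} {G : ι → Type*} [∀ j, Group (G j)] {H : Subgroup (T → ∀ j, G j)}

/-- `H` is normalized by the diagonal subgroup of `(∏ j, G j)^T`. -/
def DiagNormalized (H : Subgroup (T → ∀ j, G j)) : Prop :=
  ∀ g : ∀ j, G j, ∀ h ∈ H, (fun σ j => g j * h σ j * (g j)⁻¹) ∈ H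

/-- The coordinate homomorphism `h ↦ h σ j` on `H`. -/
def coordHom (H : Subgroup (T → ∀ j, G j)) (j : ι) (σ : T) : H →* G j :=
  (Pi.evalMonoidHom G j).comp ((Pi.evalMonoidHom _ σ).comp H.subtype)

/-- The nontrivial coordinate homomorphisms from `H` to `G j`; they index the blocks of `H` over
`j`. -/
abbrev NontrivialCoordHom (H : Subgroup (T → ∀ j, G j)) (j : ι) : Type _ :=
  ↥(Set.range (coordHom H j) \ {1})

/-- The block of `φ`: the set of all `σ ∈ T` at which the coordinate homomorphism is `φ`. -/
def block {j : ι} (φ : NontrivialCoordHom H j) : Set T := coordHom H j ⁻¹' {φ.1}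

lemma block_nonempty {j : ι} (φ : NontrivialCoordHom H j) : (block φ).Nonempty := φ.2.1

lemma disjoint_block {j : ι} {φ ψ : NontrivialCoordHom H j} (hne : φ ≠ ψ) :
    Disjoint (block φ) (block ψ) :=
  (Set.disjoint_singleton.2 (Subtype.coe_ne_coe.2 hne)).preimage _

lemma coordHom_eq_one_of_forall_notMem_block {j : ι} {σ : T}
    (hσ : ∀ φ : NontrivialCoordHom H j, σ ∉ block φ) : coordHom H j σ = 1 := by
  by_contra hne
  exact hσ ⟨coordHom H j σ, ⟨σ, rfl⟩, hne⟩ rfl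

lemma memDiagonalProduct_block {f : T → ∀ j, G j} (hf : f ∈ H) (j : ι) :
    MemDiagonalProduct (block (H := H) (j := j)) fun σ => f σ j :=
  ⟨fun φ => φ.1 ⟨f, hf⟩, fun _ _ hσ => DFunLike.congr_fun hσ ⟨f, hf⟩,
    fun _ hσ => DFunLike.congr_fun (coordHom_eq_one_of_forall_notMem_block hσ) ⟨f, hf⟩⟩

lemma range_coordHom_normal (hH : DiagNormalized H) (j : ι) (σ : T) :
    (coordHom H j σ).range.Normal := by
  classical
  constructor
  rintro _ ⟨h, rfl⟩ x
  exact ⟨⟨_, hH (Pi.mulSingle j x) h h.2⟩, by simp [coordHom]⟩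

lemma coordHom_surjective (hH : DiagNormalized H) {j : ι} [IsSimpleGroup (G j)] {σ : T}
    (hne : coordHom H j σ ≠ 1) : Function.Surjective (coordHom H j σ) :=
  MonoidHom.range_eq_top.1 <| (range_coordHom_normal hH j σ).eq_bot_or_eq_top.resolve_left
    fun hbot => hne (MonoidHom.range_eq_bot_iff.1 hbot)

lemma eq_apply_of_ker_coordHom_le (hH : DiagNormalized H) {j k : ι} {σ τ : T}
    (hcenter : Subgroup.center (G j) = ⊥) (hsurj : Function.Surjective (coordHom H j σ))
    (hker : (coordHom H k τ).ker ≤ (coordHom H j σ).ker) {g : ∀ i, G i} {h : T → ∀ i, G i}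
    (hh : h ∈ H) (hg : g k = h τ k) : g j = h σ j := by
  suffices hmem : (g j)⁻¹ * h σ j ∈ Subgroup.center (G j) by
    rwa [hcenter, Subgroup.mem_bot, inv_mul_eq_one] at hmem
  rw [Subgroup.mem_center_iff]
  intro x
  obtain ⟨u, rfl⟩ := hsurj x
  let v : H := ⟨h, hh⟩ * u * ⟨h, hh⟩⁻¹
  let w : H := ⟨_, hH g u u.2⟩
  have hτ : coordHom H k τ v = coordHom H k τ w := by
    change h τ k * (u : T → ∀ i, G i) τ k * (h τ k)⁻¹ = g k * (u : T → ∀ i, G i) τ k * (g k)⁻¹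
    rw [hg]
  have hσ : h σ j * coordHom H j σ u * (h σ j)⁻¹ = g j * coordHom H j σ u * (g j)⁻¹ :=
    (MonoidHom.eq_iff _).2 <| hker <| (MonoidHom.eq_iff _).1 hτ
  calc coordHom H j σ u * ((g j)⁻¹ * h σ j)
      = (g j)⁻¹ * (g j * coordHom H j σ u * (g j)⁻¹) * h σ j := by group
    _ = (g j)⁻¹ * h σ j * coordHom H j σ u := by rw [← hσ]; group

lemma pairwise_not_ker_le_of_nontrivialCoordHom [∀ j, IsSimpleGroup (G j)]
    (hcenter : ∀ j, Subgroup.center (G j) = ⊥) (hH : DiagNormalized H) :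
    Pairwise fun p q : Σ j, NontrivialCoordHom H j => ¬ p.2.1.ker ≤ q.2.1.ker := by
  classical
  rintro ⟨k, _, ⟨τ, rfl⟩, _⟩ ⟨j, _, ⟨σ, rfl⟩, hne⟩ hpq hker
  have apply_eq {g : ∀ i, G i} {h : T → ∀ i, G i} (hh : h ∈ H) (hg : g k = h τ k) : g j = h σ j :=
    eq_apply_of_ker_coordHom_le hH (hcenter j) (coordHom_surjective hH hne) hker hh hg
  obtain rfl : k = j := by
    by_contra hkj
    obtain ⟨x, hx⟩ := exists_ne (1 : G j)
    have hone : Pi.mulSingle j x j = (1 : G j) := apply_eq H.one_mem (Pi.mulSingle_eq_of_ne hkj x)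
    exact hx ((Pi.mulSingle_eq_same j x).symm.trans hone)
  have hcoord : coordHom H k τ = coordHom H k σ := MonoidHom.ext fun h => apply_eq h.2 rfl
  exact hpq (Sigma.ext rfl (heq_of_eq (Subtype.ext hcoord)))

theorem exists_mem_forall_coordHom_eq [Finite ι] [Finite T] [∀ j, IsSimpleGroup (G j)]
    (hcenter : ∀ j, Subgroup.center (G j) = ⊥) (hH : DiagNormalized H)
    (c : ∀ j, NontrivialCoordHom H j → G j) : ∃ h : H, ∀ j φ, φ.1 h = c j φ := by
  have hsurj (p : Σ j, NontrivialCoordHom H j) : Function.Surjective p.2.1 := by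
    obtain ⟨j, _, ⟨σ, rfl⟩, hne⟩ := p
    exact coordHom_surjective hH hne
  obtain ⟨h, hh⟩ := pi_surjective_of_pairwise_not_ker_le (fun p => hcenter p.1) hsurj
    (pairwise_not_ker_le_of_nontrivialCoordHom hcenter hH) fun p => c p.1 p.2
  exact ⟨h, fun j φ => congrFun hh ⟨j, φ⟩⟩

theorem mem_iff_forall_memDiagonalProduct_block [Finite ι] [Finite T] [∀ j, IsSimpleGroup (G j)]
    (hcenter : ∀ j, Subgroup.center (G j) = ⊥) (hH : DiagNormalized H) {f : T → ∀ j, G j} :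
    f ∈ H ↔ ∀ j, MemDiagonalProduct (block (H := H) (j := j)) fun σ => f σ j := by
  refine ⟨memDiagonalProduct_block, fun hf => ?_⟩
  choose c hc hone using hf
  obtain ⟨h, hh⟩ := exists_mem_forall_coordHom_eq hcenter hH c
  suffices hfh : f = h from hfh ▸ h.2
  funext σ j
  change f σ j = coordHom H j σ h
  by_cases hσ : ∃ φ : NontrivialCoordHom H j, σ ∈ block φ
  · obtain ⟨φ, hφ⟩ := hσ
    calc f σ j = c j φ := hc j φ σ hφ
      _ = φ.1 h := (hh j φ).symm
      _ = coordHom H j σ h := DFunLike.congr_fun (Eq.symm hφ) h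
  · rw [not_exists] at hσ
    calc f σ j = 1 := hone j σ hσ
      _ = coordHom H j σ h :=
        (DFunLike.congr_fun (coordHom_eq_one_of_forall_notMem_block hσ) h).symm

end ProductOfDiagonals

open ProductOfDiagonals in
/-- Let `G = ∏_{j=1}^t G^{(j)}` be a finite direct product of simple
non-commutative groups and `T` a nonempty finite set.  A subgroup `H` of `G^T` is normalized
by the full diagonal subgroup `Δ^T(G)` if and only if
`H = ∏_{j=1}^t ∏_{i=1}^{r_j} Δ^{T_i^{(j)}}(G^{(j)})` for pairwise disjoint nonempty subsets
`T_1^{(j)}, …, T_{r_j}^{(j)}` of `T` (for each `j`). -/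
theorem product_of_diagonals_of_product {t : ℕ} {Gj : Fin t → Type*}
    [∀ j, Group (Gj j)] [∀ j, IsSimpleGroup (Gj j)]
    (hnc : ∀ j, ∃ a b : Gj j, a * b ≠ b * a)
    {T : Type*} [Fintype T] [Nonempty T]
    (H : Subgroup (T → ∀ j, Gj j)) :
    (∀ g : ∀ j, Gj j, ∀ h ∈ H, (fun σ j => g j * h σ j * (g j)⁻¹) ∈ H) ↔
      ∃ (r : Fin t → ℕ) (Ts : (j : Fin t) → Fin (r j) → Set T),
        (∀ j i, (Ts j i).Nonempty) ∧
        (∀ j, Pairwise fun i i' => Disjoint (Ts j i) (Ts j i')) ∧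
        (∀ f : T → ∀ j, Gj j, f ∈ H ↔
          ∀ j, ∃ c : Fin (r j) → Gj j,
            (∀ i, ∀ σ ∈ Ts j i, f σ j = c i) ∧
            (∀ σ, (∀ i, σ ∉ Ts j i) → f σ j = 1)) := by
  have hcenter (j : Fin t) : Subgroup.center (Gj j) = ⊥ := center_eq_bot_of_not_commute (hnc j)
  constructor
  · intro hH
    let e (j : Fin t) : Fin _ ≃ NontrivialCoordHom H j := (Finite.equivFin _).symm
    refine ⟨_, fun j => block ∘ e j, fun j i => block_nonempty (e j i),
      fun j i i' hne => disjoint_block ((e j).injective.ne hne), fun f => ?_⟩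
    exact (mem_iff_forall_memDiagonalProduct_block hcenter hH).trans
      (forall_congr' fun j => (memDiagonalProduct_comp_equiv (e j)).symm)
  · rintro ⟨r, Ts, -, -, hmem⟩ g h hh
    exact (hmem _).2 fun j =>
      MemDiagonalProduct.map ((hmem h).1 hh j) (MulAut.conj (g j)).toMonoidHom
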